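/- arXiv:math-ph/9904005 — 3 statements merged into one kernel-verified Lean document; each statement's English description precedes it below -/
import Mathlib

section
/- Let u, v and k be real numbers with 0 < p < 1, q = 1 − p. Then p·sin²(πku) + q·sin²(πkv) − pq·sin²(πk(u−v)) ≥ 0, with equality if and only if ku ∈ ℤ and kv ∈ ℤ. -/
open scoped Real

/-!
Put `x = πku`, `y = πkv` and `r = p e^{-2ix} + q e^{-2iy}`. Since
`1 - r = p (1 - e^{-2ix}) + q (1 - e^{-2iy})`, the expression in question, which equals
`|1 - r|² / 4`, is the sum of the squares of the halved real and imaginary parts,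
`p sin² x + q sin² y` and `p sin x cos x + q sin y cos y` (`sum_of_squares`). It is therefore
nonnegative, and if it vanishes then so does `p sin² x + q sin² y`; as `p, q > 0`, this forces
`sin x = sin y = 0`, i.e. `ku, kv ∈ ℤ`.
-/

theorem sum_of_squares (x y p : ℝ) :
    p * Real.sin x ^ 2 + (1 - p) * Real.sin y ^ 2 - p * (1 - p) * Real.sin (x - y) ^ 2 =
      (p * Real.sin x ^ 2 + (1 - p) * Real.sin y ^ 2) ^ 2 +
        (p * (Real.sin x * Real.cos x) + (1 - p) * (Real.sin y * Real.cos y)) ^ 2 := by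
  rw [Real.sin_sub]
  have hx := Real.cos_sq' x
  have hy := Real.cos_sq' y
  ring_nf
  simp only [hx, hy]
  ring

theorem sin_pi_mul_eq_zero_iff (k w : ℝ) :
    Real.sin (π * k * w) = 0 ↔ ∃ a : ℤ, k * w = (a : ℝ) := by
  rw [Real.sin_eq_zero_iff]
  refine exists_congr fun a => ?_
  rw [mul_assoc, mul_comm π, mul_left_inj' Real.pi_ne_zero, eq_comm]

/-- For `0 < p < 1`, `q = 1 - p`, the expression
`p sin²(πku) + q sin²(πkv) - pq sin²(πk(u-v))` is nonnegative, and vanishes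
if and only if `ku ∈ ℤ` and `kv ∈ ℤ`. -/
theorem stmt_13 (u v k p : ℝ) (hp0 : 0 < p) (hp1 : p < 1) (q : ℝ) (hq : q = 1 - p) :
    0 ≤ p * Real.sin (π * k * u) ^ 2 + q * Real.sin (π * k * v) ^ 2 -
        p * q * Real.sin (π * k * (u - v)) ^ 2 ∧
    (p * Real.sin (π * k * u) ^ 2 + q * Real.sin (π * k * v) ^ 2 -
        p * q * Real.sin (π * k * (u - v)) ^ 2 = 0 ↔
      (∃ a : ℤ, k * u = (a : ℝ)) ∧ (∃ b : ℤ, k * v = (b : ℝ))) := by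
  subst hq
  have hq0 : 0 < 1 - p := sub_pos.mpr hp1
  rw [← sin_pi_mul_eq_zero_iff, ← sin_pi_mul_eq_zero_iff, mul_sub (π * k), sum_of_squares]
  refine ⟨by positivity, fun h => ?_, fun ⟨hx, hy⟩ => by simp [hx, hy]⟩
  have h1 := pow_eq_zero_iff two_ne_zero |>.mp
    ((add_eq_zero_iff_of_nonneg (sq_nonneg _) (sq_nonneg _)).mp h).1
  obtain ⟨hx, hy⟩ := (add_eq_zero_iff_of_nonneg (by positivity) (by positivity)).mp h1
  exact ⟨by simpa [hp0.ne'] using hx, by simpa [hq0.ne'] using hy⟩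
end

section
/- Let A and B be n×n complex Hermitian matrices such that the rank of A − B is at most s. Then for every real interval I, the number of eigenvalues of A lying in I (counted with multiplicity) and the number of eigenvalues of B lying in I (counted with multiplicity) differ by at most s. In particular, if A and B differ only in the entries of r rows and the corresponding r columns, then rank(A − B) ≤ 2r and the eigenvalue counts in any interval differ by at most 2r. -/
/-!
Suppose `A` has more than `b + s` eigenvalues in `I`, where `b` is the number of eigenvalues of `B`
in `I` and `s = rank (A - B)`. Asking a vector `x` to lie in the span of the eigenvectors of `A`
with eigenvalue in `I`, to be orthogonal to the eigenvectors of `B` with eigenvalue in `I`, and to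
satisfy `A x = B x` imposes fewer than `n` linear conditions, so some `x ≠ 0` satisfies all three
(`exists_common_vector`). Let `p` and `q` be the smallest and the largest eigenvalue of `A` in `I`,
so that `[p, q] ⊆ I`. Expanded in an eigenbasis of `A`, the number `re ⟪A x - p x, A x - q x⟫` is
`∑ (αᵢ - p) (αᵢ - q) |xᵢ|² ≤ 0`; expanded in an eigenbasis of `B`, the same number is positive,
because `x` only has components with eigenvalues outside `[p, q]`. This is a contradiction.

If `A` and `B` agree outside the rows and columns in `t`, then `A - B` is the sum of a matrix
supported on the rows in `t` and one supported on the columns in `t`, each of rank at most `|t|`.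
-/

open scoped Classical

open Matrix

lemma repr_toEuclideanLin {n : ℕ} {A : Matrix (Fin n) (Fin n) ℂ} (hA : A.IsHermitian)
    (x : EuclideanSpace ℂ (Fin n)) (i : Fin n) :
    hA.eigenvectorBasis.repr (toEuclideanLin A x) i =
      (hA.eigenvalues i : ℂ) * hA.eigenvectorBasis.repr x i := by
  have hv : toEuclideanLin A (hA.eigenvectorBasis i) =
      (hA.eigenvalues i : ℂ) • hA.eigenvectorBasis i := by
    ext j
    have h := congrFun (hA.mulVec_eigenvectorBasis i) j
    simpa [toLpLin_apply] using h
  rw [OrthonormalBasis.repr_apply_apply, OrthonormalBasis.repr_apply_apply,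
    ← isSymmetric_toEuclideanLin_iff.mpr hA, hv, inner_smul_left, Complex.conj_ofReal]

/-- The quadratic form of `(A - p) (A - q)` in coordinates with respect to an eigenbasis of `A`. -/
lemma re_inner_sub_sub {n : ℕ} {A : Matrix (Fin n) (Fin n) ℂ} (hA : A.IsHermitian)
    (x : EuclideanSpace ℂ (Fin n)) (p q : ℝ) :
    (inner ℂ (toEuclideanLin A x - (p : ℂ) • x) (toEuclideanLin A x - (q : ℂ) • x)).re =
      ∑ i, (hA.eigenvalues i - p) * (hA.eigenvalues i - q) *
        ‖hA.eigenvectorBasis.repr x i‖ ^ 2 := by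
  rw [← hA.eigenvectorBasis.repr.inner_map_map, PiLp.inner_apply, Complex.re_sum]
  refine Finset.sum_congr rfl fun i _ => ?_
  simp only [map_sub, map_smul, PiLp.sub_apply, PiLp.smul_apply, repr_toEuclideanLin, smul_eq_mul]
  rw [← Complex.normSq_eq_norm_sq, Complex.normSq_apply]
  simp
  ring

/-- The subspace of all `x` satisfying the three conditions is the kernel of a linear map into a
space of dimension `#{i | ¬ P i} + #{i | Q i} + rank (A - B)`. -/
lemma exists_common_vector {n : ℕ} (A B : Matrix (Fin n) (Fin n) ℂ)
    (u v : OrthonormalBasis (Fin n) ℂ (EuclideanSpace ℂ (Fin n))) (P Q : Fin n → Prop)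
    (h : (Finset.univ.filter Q).card + (A - B).rank < (Finset.univ.filter P).card) :
    ∃ x : EuclideanSpace ℂ (Fin n), x ≠ 0 ∧ (∀ i, ¬ P i → u.repr x i = 0) ∧
      (∀ i, Q i → v.repr x i = 0) ∧ toEuclideanLin A x = toEuclideanLin B x := by
  let f : EuclideanSpace ℂ (Fin n) →ₗ[ℂ] ({i // ¬ P i} → ℂ) :=
    LinearMap.pi fun i => (EuclideanSpace.proj i.1).toLinearMap ∘ₗ u.repr.toLinearMap
  let g : EuclideanSpace ℂ (Fin n) →ₗ[ℂ] ({i // Q i} → ℂ) :=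
    LinearMap.pi fun i => (EuclideanSpace.proj i.1).toLinearMap ∘ₗ v.repr.toLinearMap
  let d := (toEuclideanLin (A - B)).rangeRestrict
  have hd : Module.finrank ℂ (LinearMap.range (toEuclideanLin (A - B))) = (A - B).rank := by
    rw [toEuclideanLin_eq_toLin_orthonormal, ← rank_eq_finrank_range_toLin]
  have hlt : Module.finrank ℂ (({i // ¬ P i} → ℂ) × ({i // Q i} → ℂ) ×
      LinearMap.range (toEuclideanLin (A - B))) <
      Module.finrank ℂ (EuclideanSpace ℂ (Fin n)) := by
    have hP : Fintype.card {i // ¬ P i} + (Finset.univ.filter P).card = n := by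
      have hc := Fintype.card_subtype_compl P
      have hle := Fintype.card_subtype_le P
      have hs : Fintype.card {i // P i} = (Finset.univ.filter P).card := by
        convert Fintype.card_subtype P
      rw [Fintype.card_fin] at hc hle
      omega
    have hQ : Fintype.card {i // Q i} = (Finset.univ.filter Q).card := by
      convert Fintype.card_subtype Q
    rw [Module.finrank_prod, Module.finrank_prod, hd, Module.finrank_fintype_fun_eq_card,
      Module.finrank_fintype_fun_eq_card, finrank_euclideanSpace_fin]
    omega
  obtain ⟨x, hx, hx0⟩ := (Submodule.ne_bot_iff _).mp
    (LinearMap.ker_ne_bot_of_finrank_lt (f := f.prod (g.prod d)) hlt)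
  have hx' : (f x, g x, d x) = 0 := hx
  obtain ⟨h1, h23⟩ := Prod.mk_eq_zero.mp hx'
  obtain ⟨h2, h3⟩ := Prod.mk_eq_zero.mp h23
  refine ⟨x, hx0, fun i hi => congrFun h1 ⟨i, hi⟩, fun i hi => congrFun h2 ⟨i, hi⟩, ?_⟩
  have h4 : toEuclideanLin (A - B) x = 0 := congrArg Subtype.val h3
  rw [map_sub, LinearMap.sub_apply] at h4
  exact sub_eq_zero.mp h4

/-- One of the two inequalities; the other one is its instance with `A` and `B` exchanged. -/
lemma card_eigenvalues_le {n : ℕ} {A B : Matrix (Fin n) (Fin n) ℂ}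
    (hA : A.IsHermitian) (hB : B.IsHermitian) (I : Set ℝ) (hI : I.OrdConnected) :
    (Finset.univ.filter (fun i => hA.eigenvalues i ∈ I)).card ≤
      (Finset.univ.filter (fun i => hB.eigenvalues i ∈ I)).card + (A - B).rank := by
  by_contra! hlt
  obtain ⟨x, hx0, hxA, hxB, hx⟩ := exists_common_vector A B hA.eigenvectorBasis
    hB.eigenvectorBasis (fun i => hA.eigenvalues i ∈ I) (fun i => hB.eigenvalues i ∈ I) hlt
  have hne : (Finset.univ.filter (fun i => hA.eigenvalues i ∈ I)).Nonempty :=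
    Finset.card_pos.mp (by omega)
  obtain ⟨k, hk, hkmin⟩ := Finset.exists_min_image _ hA.eigenvalues hne
  obtain ⟨l, hl, hlmax⟩ := Finset.exists_max_image _ hA.eigenvalues hne
  simp only [Finset.mem_filter, Finset.mem_univ, true_and] at hk hl hkmin hlmax
  have hpq := hkmin l hl
  set p := hA.eigenvalues k
  set q := hA.eigenvalues l
  have h1 := re_inner_sub_sub hA x p q
  rw [hx, re_inner_sub_sub hB x p q] at h1
  have hneg : ∑ i, (hA.eigenvalues i - p) * (hA.eigenvalues i - q) *
      ‖hA.eigenvectorBasis.repr x i‖ ^ 2 ≤ 0 := by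
    refine Finset.sum_nonpos fun i _ => ?_
    by_cases hi : hA.eigenvalues i ∈ I
    · exact mul_nonpos_of_nonpos_of_nonneg (mul_nonpos_of_nonneg_of_nonpos
        (sub_nonneg.mpr (hkmin i hi)) (sub_nonpos.mpr (hlmax i hi))) (sq_nonneg _)
    · simp [hxA i hi]
  have hout : ∀ i, hB.eigenvalues i ∉ I →
      0 < (hB.eigenvalues i - p) * (hB.eigenvalues i - q) := by
    intro i hi
    by_cases h : p ≤ hB.eigenvalues i
    · have h' : q < hB.eigenvalues i := by
        by_contra! h'
        exact hi (hI.out hk hl ⟨h, h'⟩)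
      exact mul_pos (by linarith) (by linarith)
    · push Not at h
      exact mul_pos_of_neg_of_neg (by linarith) (by linarith)
  have hpos : 0 < ∑ i, (hB.eigenvalues i - p) * (hB.eigenvalues i - q) *
      ‖hB.eigenvectorBasis.repr x i‖ ^ 2 := by
    obtain ⟨j, hj⟩ : ∃ j, hB.eigenvectorBasis.repr x j ≠ 0 := by
      by_contra! h0
      exact hx0 (hB.eigenvectorBasis.repr.map_eq_zero_iff.mp (PiLp.ext h0))
    refine Finset.sum_pos' (fun i _ => ?_) ⟨j, Finset.mem_univ j, ?_⟩
    · by_cases hi : hB.eigenvalues i ∈ I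
      · simp [hxB i hi]
      · exact mul_nonneg (hout i hi).le (sq_nonneg _)
    · exact mul_pos (hout j fun hjI => hj (hxB j hjI)) (pow_pos (norm_pos_iff.mpr hj) 2)
  linarith

lemma rank_diagonal_indicator {n : ℕ} (t : Finset (Fin n)) :
    (diagonal fun i => if i ∈ t then (1 : ℂ) else 0).rank = t.card := by
  simp [rank_diagonal]

lemma matrix_rank_add_le {n : ℕ} (C D : Matrix (Fin n) (Fin n) ℂ) :
    (C + D).rank ≤ C.rank + D.rank := by
  unfold Matrix.rank
  rw [mulVecLin_add]
  exact (Submodule.finrank_mono (LinearMap.range_add_le _ _)).trans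
    (Submodule.finrank_add_le_finrank_add_finrank _ _)

lemma rank_le_of_eq_zero_off {n : ℕ} (D : Matrix (Fin n) (Fin n) ℂ) (t : Finset (Fin n))
    (h : ∀ i j, i ∉ t → j ∉ t → D i j = 0) : D.rank ≤ 2 * t.card := by
  let E : Matrix (Fin n) (Fin n) ℂ := diagonal fun i => if i ∈ t then (1 : ℂ) else 0
  -- The rows in `t`, plus what remains, which is supported on the columns in `t`.
  have hD : D = E * D + (D - E * D) * E := by
    ext i j
    simp only [E, Matrix.add_apply, Matrix.sub_apply, diagonal_mul, mul_diagonal]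
    by_cases hi : i ∈ t <;> by_cases hj : j ∈ t <;> simp [hi, hj, h]
  have hE : E.rank = t.card := rank_diagonal_indicator t
  calc D.rank = (E * D + (D - E * D) * E).rank := by rw [← hD]
    _ ≤ (E * D).rank + ((D - E * D) * E).rank := matrix_rank_add_le _ _
    _ ≤ E.rank + E.rank := add_le_add (rank_mul_le_left _ _) (rank_mul_le_right _ _)
    _ = 2 * t.card := by rw [hE]; ring

/-- Ledermann's lemma: if `A` and `B` are Hermitian `n×n` matrices with
`rank (A - B) ≤ s`, then in any real interval the numbers of eigenvalues of `A`
and of `B` (with multiplicity) differ by at most `s`. In particular, if `A` and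
`B` differ only in the entries of `r` rows and the corresponding columns, then
`rank (A - B) ≤ 2r` and the eigenvalue counts differ by at most `2r`. -/
theorem stmt_17 (n : ℕ) (A B : Matrix (Fin n) (Fin n) ℂ)
    (hA : A.IsHermitian) (hB : B.IsHermitian) :
    (∀ s : ℕ, (A - B).rank ≤ s →
      ∀ I : Set ℝ, I.OrdConnected →
        (Finset.univ.filter (fun i => hA.eigenvalues i ∈ I)).card ≤
          (Finset.univ.filter (fun i => hB.eigenvalues i ∈ I)).card + s ∧
        (Finset.univ.filter (fun i => hB.eigenvalues i ∈ I)).card ≤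
          (Finset.univ.filter (fun i => hA.eigenvalues i ∈ I)).card + s) ∧
    (∀ r : ℕ, ∀ t : Finset (Fin n), t.card = r →
      (∀ i j, i ∉ t → j ∉ t → A i j = B i j) →
      (A - B).rank ≤ 2 * r ∧
      ∀ I : Set ℝ, I.OrdConnected →
        (Finset.univ.filter (fun i => hA.eigenvalues i ∈ I)).card ≤
          (Finset.univ.filter (fun i => hB.eigenvalues i ∈ I)).card + 2 * r ∧
        (Finset.univ.filter (fun i => hB.eigenvalues i ∈ I)).card ≤
          (Finset.univ.filter (fun i => hA.eigenvalues i ∈ I)).card + 2 * r) := by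
  have key : ∀ s : ℕ, (A - B).rank ≤ s → ∀ I : Set ℝ, I.OrdConnected →
      (Finset.univ.filter (fun i => hA.eigenvalues i ∈ I)).card ≤
        (Finset.univ.filter (fun i => hB.eigenvalues i ∈ I)).card + s ∧
      (Finset.univ.filter (fun i => hB.eigenvalues i ∈ I)).card ≤
        (Finset.univ.filter (fun i => hA.eigenvalues i ∈ I)).card + s := by
    intro s hs I hI
    have h1 := card_eigenvalues_le hA hB I hI
    have h2 := card_eigenvalues_le hB hA I hI
    have h3 : (B - A).rank ≤ (A - B).rank := by
      rw [show B - A = (A - B) * (-1) by simp]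
      exact rank_mul_le_left _ _
    exact ⟨by omega, by omega⟩
  refine ⟨key, ?_⟩
  rintro r t rfl ht
  have hr : (A - B).rank ≤ 2 * t.card :=
    rank_le_of_eq_zero_off _ t fun i j hi hj => by simp [ht i j hi hj]
  exact ⟨hr, key _ hr⟩
end

section
/- Let φ₀ ∈ (0, π) satisfy cos φ₀ + 1 ≥ (π − φ₀)·sin φ₀. Then for every θ ∈ [φ₀, π], cos θ ≤ cos φ₀ − (θ − φ₀)·sin φ₀. -/
/-!
Let `g θ = cos φ₀ - (θ - φ₀) sin φ₀ - cos θ` be the gap between the tangent line and the cosine.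
Its derivative `sin θ - sin φ₀ = 2 sin ((θ - φ₀) / 2) cos ((θ + φ₀) / 2)` is, on `[φ₀, π]`,
nonnegative while `θ ≤ π - φ₀` and nonpositive afterwards. Hence `g θ` is bounded below by
`g φ₀ = 0` in the first range and by `g π` in the second, and `0 ≤ g π` is the hypothesis on `φ₀`.
-/

open scoped Real

/-- Tangent-line bound for the cosine: if `φ₀ ∈ (0, π)` satisfies
`cos φ₀ + 1 ≥ (π - φ₀) sin φ₀`, then for every `θ ∈ [φ₀, π]`,
`cos θ ≤ cos φ₀ - (θ - φ₀) sin φ₀`. -/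
theorem stmt_19 (φ₀ : ℝ) (h0 : 0 < φ₀) (hπ : φ₀ < π)
    (hcond : (π - φ₀) * Real.sin φ₀ ≤ Real.cos φ₀ + 1) :
    ∀ θ ∈ Set.Icc φ₀ π, Real.cos θ ≤ Real.cos φ₀ - (θ - φ₀) * Real.sin φ₀ := by
  rintro θ ⟨hθ0, hθπ⟩
  let g : ℝ → ℝ := fun x => Real.cos φ₀ - (x - φ₀) * Real.sin φ₀ - Real.cos x
  have hg : ∀ x, HasDerivAt g (Real.sin x - Real.sin φ₀) x := by
    intro x
    have h := ((((hasDerivAt_id x).sub_const φ₀).mul_const (Real.sin φ₀)).const_sub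
      (Real.cos φ₀)).sub (Real.hasDerivAt_cos x)
    exact h.congr_deriv (by ring)
  have hgd : Differentiable ℝ g := fun x => (hg x).differentiableAt
  have hsin : ∀ x, φ₀ ≤ x → x ≤ π → 0 ≤ Real.sin ((x - φ₀) / 2) := fun x h1 h2 =>
    Real.sin_nonneg_of_nonneg_of_le_pi (by linarith) (by linarith)
  suffices h : 0 ≤ g θ from sub_nonneg.mp h
  rcases le_total θ (π - φ₀) with h | h
  · have hmono : MonotoneOn g (Set.Icc φ₀ θ) := by
      refine monotoneOn_of_deriv_nonneg (convex_Icc _ _) hgd.continuous.continuousOn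
        hgd.differentiableOn fun x hx => ?_
      rw [interior_Icc] at hx
      obtain ⟨hx1, hx2⟩ := hx
      rw [(hg x).deriv, Real.sin_sub_sin]
      have hs := hsin x hx1.le (by linarith)
      have hc : 0 ≤ Real.cos ((x + φ₀) / 2) :=
        Real.cos_nonneg_of_neg_pi_div_two_le_of_le (by linarith) (by linarith)
      positivity
    have hle := hmono (Set.left_mem_Icc.2 hθ0) (Set.right_mem_Icc.2 hθ0) hθ0
    have hg0 : g φ₀ = 0 := by simp [g]
    linarith
  · have hanti : AntitoneOn g (Set.Icc θ π) := by
      refine antitoneOn_of_deriv_nonpos (convex_Icc _ _) hgd.continuous.continuousOn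
        hgd.differentiableOn fun x hx => ?_
      rw [interior_Icc] at hx
      obtain ⟨hx1, hx2⟩ := hx
      rw [(hg x).deriv, Real.sin_sub_sin]
      have hs := hsin x (by linarith) hx2.le
      have hc : Real.cos ((x + φ₀) / 2) ≤ 0 :=
        Real.cos_nonpos_of_pi_div_two_le_of_le (by linarith) (by linarith)
      exact mul_nonpos_of_nonneg_of_nonpos (by positivity) hc
    have hle := hanti (Set.left_mem_Icc.2 hθπ) (Set.right_mem_Icc.2 hθπ) hθπ
    have hgπ : g π = Real.cos φ₀ - (π - φ₀) * Real.sin φ₀ + 1 := by simp [g]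
    linarith
end
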